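/- Fix a prime p and an integer k ≥ 1, and let Λ := 𝔽_p^ω = ⊕_{n∈ℕ} ℤ/pℤ. For every filtered polynomial map f : Λ → H_{p,k} (with respect to the filtration of H_{p,k}), let Y_f be the closure in (H_{p,k})^Λ (product topology) of the shift orbit {f(·+z) : z ∈ Λ}. Then the system (Y_f, Λ) with the shift action is minimal (for every g ∈ Y_f the orbit {g(·+z) : z ∈ Λ} is dense in Y_f; in particular it is transitive) and is topological Abramov of order at most k. -/

import Mathlib

variable {Λ G Y : Type*}

/-- Difference operator: `dd h f x = f (x+h) - f x`. -/
def dd [Add Λ] [Sub G] (h : Λ) (f : Λ → G) : Λ → G := fun x => f (x + h) - f x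

/-- Iterated difference operator along a list of shifts. -/
def dds [Add Λ] [Sub G] (hs : List Λ) (f : Λ → G) : Λ → G := hs.foldr dd f

/-- `f : Λ → G` is a filtered polynomial with respect to the filtration `Gf`. -/
def IsFilteredPoly [Add Λ] [AddCommGroup G] (Gf : ℕ → AddSubgroup G) (f : Λ → G) : Prop :=
  ∀ hs : List Λ, hs ≠ [] → ∀ x, dds hs f x ∈ Gf hs.length

/-- The shift orbit of `f : Λ → G` inside `G^Λ`. -/
def orbit' [Add Λ] (f : Λ → G) : Set (Λ → G) := {g : Λ → G | ∃ z : Λ, g = fun x => f (x + z)}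

/-- The orbit closure of a point of `G^Λ` is invariant under the shift action. -/
theorem shift_mem_orbitClosure [AddCommMonoid Λ] [TopologicalSpace G] (f : Λ → G) (z : Λ)
    {g : Λ → G} (hg : g ∈ closure (orbit' f)) :
    (fun x => g (x + z)) ∈ closure (orbit' f) := by
  have hc : Continuous (fun (u : Λ → G) => (fun x => u (x + z))) :=
    continuous_pi fun x => continuous_apply (x + z)
  refine map_mem_closure hc hg ?_
  rintro u ⟨w, rfl⟩
  exact ⟨z + w, by funext x; simp [add_assoc]⟩

/-- Multiplicative derivative `Δ_z φ (y) = φ (z·y) * conj (φ y)` for an action `T`. -/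
def pd (T : Λ → Y → Y) (z : Λ) (φ : Y → ℂ) : Y → ℂ :=
  fun y => φ (T z y) * (starRingEnd ℂ) (φ y)

/-- Iterated multiplicative derivative. -/
def pds (T : Λ → Y → Y) (zs : List Λ) (φ : Y → ℂ) : Y → ℂ := zs.foldr (pd T) φ

/-- `φ` is a continuous phase polynomial of degree at most `k` for the action `T` on `Y`. -/
def IsPhasePoly [TopologicalSpace Y] (T : Λ → Y → Y) (k : ℕ) (φ : Y → ℂ) : Prop :=
  Continuous φ ∧ ∀ zs : List Λ, zs.length = k + 1 → ∀ y, pds T zs φ y = 1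

/-- Discrete topology on `ZMod n` (each factor of `H_{p,k}` is a finite group). -/
instance ZMod.topologicalSpace' (n : ℕ) : TopologicalSpace (ZMod n) := ⊥

/-- The cyclic group `G^{(ℓ)} = ℤ/p^{j_ℓ}ℤ` with `j_ℓ = ⌊(k−ℓ)/(p−1)⌋ + 1`, where the index
`ℓ : Fin k` represents `ℓ+1 ∈ {1, …, k}`. -/
abbrev Hfactor (p k : ℕ) (ℓ : Fin k) : Type := ZMod (p ^ ((k - (ℓ.1 + 1)) / (p - 1) + 1))

/-- The compact abelian group `H_{p,k} = ∏_{ℓ=1}^{k} (G^{(ℓ)})^ℕ` with the product topology. -/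
abbrev Hpk (p k : ℕ) : Type := (ℓ : Fin k) → ℕ → Hfactor p k ℓ

/-- The subgroup `G^{(ℓ)}_{(i)}`: all of `G^{(ℓ)}` for `i ≤ ℓ`, and
`p^{⌊(i−ℓ−1)/(p−1)⌋+1}·G^{(ℓ)}` for `i > ℓ`. -/
def HfactorFilt (p k : ℕ) (ℓ : Fin k) (i : ℕ) : AddSubgroup (Hfactor p k ℓ) :=
  if i ≤ ℓ.1 + 1 then ⊤
  else AddSubgroup.zmultiples ((p : Hfactor p k ℓ) ^ ((i - (ℓ.1 + 1) - 1) / (p - 1) + 1))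

/-- The degree-`k` filtration `(H_{p,k})_{(i)} = ∏_{ℓ=1}^{k} (G^{(ℓ)}_{(i)})^ℕ` on `H_{p,k}`. -/
def HpkFilt (p k : ℕ) (i : ℕ) : AddSubgroup (Hpk p k) :=
  AddSubgroup.pi Set.univ fun ℓ => AddSubgroup.pi Set.univ fun _ : ℕ => HfactorFilt p k ℓ i

/-!
Let `f : Λ → G` be polynomial. Each shift `T` is additive on `G^Λ` and unipotent on polynomials:
`T a - a` has smaller degree than `a`. Both properties are closed conditions, so they pass to every
map in the Ellis semigroup, the pointwise closure of the set of shifts. An additive unipotent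
idempotent is the identity, so every idempotent of the Ellis semigroup fixes `f`. As each of its
left ideals contains an idempotent, `f` is a limit of shifts of every limit of its own shifts.

For the Abramov property, a character `χ` of `G` and a point `x : Λ` give the function
`F ↦ χ (F x)`, whose iterated multiplicative derivatives are `χ` of the iterated differences of `F`
at `x`. It is therefore a phase polynomial. Such functions separate points, and phase polynomials
form a star-closed monoid, so the Stone–Weierstrass theorem applies.
-/

/-! ### Transformation semigroups and their pointwise closures -/

section TransformationSemigroup

variable {X : Type*} [TopologicalSpace X] {S : Set (X → X)}

theorem continuous_comp_right (v : X → X) : Continuous fun u : X → X => u ∘ v :=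
  continuous_pi fun x => continuous_apply (v x)

theorem comp_mem_closure (hcont : ∀ u ∈ S, Continuous u) (hcomp : ∀ u ∈ S, ∀ v ∈ S, u ∘ v ∈ S)
    {u v : X → X} (hu : u ∈ closure S) (hv : v ∈ closure S) : u ∘ v ∈ closure S := by
  have hcomp_left : ∀ w ∈ S, w ∘ v ∈ closure S := fun w hw =>
    map_mem_closure (continuous_pi fun x => (hcont w hw).comp (continuous_apply x)) hv (hcomp w hw)
  have hmem : u ∘ v ∈ closure (closure S) :=
    map_mem_closure (f := fun w => w ∘ v) (continuous_comp_right v) hu hcomp_left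
  rwa [closure_closure] at hmem

theorem exists_idempotent_of_isCompact [T2Space X] (hne : S.Nonempty) (hS : IsCompact S)
    (hcomp : ∀ u ∈ S, ∀ v ∈ S, u ∘ v ∈ S) : ∃ e ∈ S, e ∘ e = e :=
  letI : Semigroup (X → X) := inferInstanceAs (Semigroup (Function.End X))
  exists_idempotent_in_compact_subsemigroup continuous_comp_right S hne hS hcomp

theorem mem_closure_image_eval_symm [CompactSpace X] [T2Space X]
    (hcont : ∀ u ∈ S, Continuous u) (hcomp : ∀ u ∈ S, ∀ v ∈ S, u ∘ v ∈ S) {x y : X}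
    (hfix : ∀ e ∈ closure S, e ∘ e = e → e x = x) (hy : y ∈ closure ((fun u => u x) '' S)) :
    x ∈ closure ((fun u => u y) '' S) := by
  have hcompact : IsCompact (closure S) := isClosed_closure.isCompact
  have image_eval (a : X) : (fun u => u a) '' closure S = closure ((fun u => u a) '' S) :=
    image_closure_of_isCompact hcompact (continuous_apply a).continuousOn
  have hmul {u v : X → X} (hu : u ∈ closure S) (hv : v ∈ closure S) : u ∘ v ∈ closure S :=
    comp_mem_closure hcont hcomp hu hv
  rw [← image_eval] at hy ⊢
  obtain ⟨u, hu, rfl⟩ := hy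
  obtain ⟨_, ⟨v, hv, rfl⟩, hidem⟩ :
      ∃ e ∈ (fun v : X → X => v ∘ u) '' closure S, e ∘ e = e := by
    refine exists_idempotent_of_isCompact ⟨_, u, hu, rfl⟩
      (hcompact.image (continuous_comp_right u)) ?_
    rintro _ ⟨v, hv, rfl⟩ _ ⟨w, hw, rfl⟩
    exact ⟨v ∘ u ∘ w, hmul hv (hmul hu hw), rfl⟩
  exact ⟨v, hv, hfix _ (hmul hv hu) hidem⟩

end TransformationSemigroup

/-! ### Shifts -/

section Shift

variable [AddCommMonoid Λ]

/-- The action of `z : Λ` on `G^Λ` by translation of the argument. -/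
def shift (z : Λ) (f : Λ → G) : Λ → G := fun x => f (x + z)

theorem shift_comp_shift (z w : Λ) :
    (shift z ∘ shift w : (Λ → G) → (Λ → G)) = shift (z + w) := by
  funext f x
  simp only [Function.comp_apply, shift, add_assoc]

theorem orbit'_eq_image_range_shift (f : Λ → G) :
    orbit' f = (fun u : (Λ → G) → (Λ → G) => u f) '' Set.range shift := by
  ext g
  simp only [orbit', Set.mem_ofPred_eq, Set.mem_image, Set.exists_range_iff, eq_comm (a := g)]
  rfl

variable [TopologicalSpace G]

theorem continuous_shift (z : Λ) : Continuous (shift z : (Λ → G) → (Λ → G)) :=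
  continuous_pi fun x => continuous_apply (x + z)

theorem closure_orbit'_subset {f g : Λ → G} (hg : g ∈ closure (orbit' f)) :
    closure (orbit' g) ⊆ closure (orbit' f) := by
  refine closure_minimal ?_ isClosed_closure
  rintro _ ⟨z, rfl⟩
  exact shift_mem_orbitClosure f z hg

/-- The shift action of `Λ` restricted to the orbit closure of `f`. -/
def orbitClosureShift (f : Λ → G) (z : Λ) (F : closure (orbit' f)) : closure (orbit' f) :=
  ⟨shift z F.1, shift_mem_orbitClosure f z F.2⟩

end Shift

/-! ### Iterated differences and polynomial maps -/

section Differences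

variable [AddCommMonoid Λ] [AddCommGroup G]

theorem dds_cons (h : Λ) (hs : List Λ) (f : Λ → G) (x : Λ) :
    dds (h :: hs) f x = dds hs f (x + h) - dds hs f x := rfl

theorem dds_shift (hs : List Λ) (z : Λ) (f : Λ → G) (x : Λ) :
    dds hs (shift z f) x = dds hs f (x + z) := by
  induction hs generalizing x with
  | nil => rfl
  | cons h hs ih => rw [dds_cons, dds_cons, ih, ih, add_right_comm]

theorem dds_sub (hs : List Λ) (f g : Λ → G) (x : Λ) :
    dds hs (f - g) x = dds hs f x - dds hs g x := by
  induction hs generalizing x with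
  | nil => rfl
  | cons h hs ih => rw [dds_cons, dds_cons, dds_cons, ih, ih, sub_sub_sub_comm]

theorem dds_zero (hs : List Λ) (x : Λ) : dds hs (0 : Λ → G) x = 0 := by
  rw [← sub_self (0 : Λ → G), dds_sub, sub_self]

variable (Λ G) in
/-- The group of polynomial maps `Λ → G` of degree less than `i`, that is, of maps killed by all
`i`-fold differences. Bounding the degree strictly makes `polyLT Λ G 0` the zero group. -/
def polyLT (i : ℕ) : AddSubgroup (Λ → G) :=
  AddSubgroup.ofSub {f | ∀ hs : List Λ, hs.length = i → ∀ x, dds hs f x = 0}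
    ⟨0, fun hs _ x => dds_zero hs x⟩
    fun f hf g hg hs hlen x => by
      rw [← sub_eq_add_neg, dds_sub, hf hs hlen, hg hs hlen, sub_zero]

theorem mem_polyLT {i : ℕ} {f : Λ → G} :
    f ∈ polyLT Λ G i ↔ ∀ hs : List Λ, hs.length = i → ∀ x, dds hs f x = 0 := Iff.rfl

theorem eq_zero_of_mem_polyLT_zero {f : Λ → G} (hf : f ∈ polyLT Λ G 0) : f = 0 :=
  funext fun x => hf [] rfl x

theorem polyLT_le_succ (i : ℕ) : polyLT Λ G i ≤ polyLT Λ G (i + 1) := by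
  rintro f hf (_ | ⟨h, hs⟩) hlen x
  · simp at hlen
  · have hlen' : hs.length = i := by simpa using hlen
    rw [dds_cons, hf hs hlen', hf hs hlen', sub_zero]

theorem shift_sub_self_mem_polyLT {i : ℕ} {f : Λ → G} (hf : f ∈ polyLT Λ G (i + 1)) (z : Λ) :
    shift z f - f ∈ polyLT Λ G i := fun hs hlen x => by
  rw [dds_sub, dds_shift, ← dds_cons]
  exact hf (z :: hs) (by rw [List.length_cons, hlen]) x

theorem IsFilteredPoly.mem_polyLT_succ {Gf : ℕ → AddSubgroup G} {f : Λ → G}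
    (hf : IsFilteredPoly Gf f) {k : ℕ} (hGf : Gf (k + 1) = ⊥) : f ∈ polyLT Λ G (k + 1) :=
  fun hs hlen x => by
    have hmem := hf hs (List.ne_nil_of_length_eq_add_one hlen) x
    rwa [hlen, hGf, AddSubgroup.mem_bot] at hmem

section Topology

variable [TopologicalSpace G] [IsTopologicalAddGroup G]

theorem continuous_dds (hs : List Λ) (x : Λ) : Continuous fun f : Λ → G => dds hs f x := by
  induction hs generalizing x with
  | nil => exact continuous_apply x
  | cons h hs ih => exact (ih (x + h)).sub (ih x)

theorem isClosed_polyLT [T1Space G] (i : ℕ) : IsClosed (polyLT Λ G i : Set (Λ → G)) := by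
  have hset : (polyLT Λ G i : Set (Λ → G)) =
      ⋂ (hs : List Λ) (_ : hs.length = i) (x : Λ), (fun f => dds hs f x) ⁻¹' {0} := by
    ext f
    simp only [SetLike.mem_coe, mem_polyLT, Set.mem_iInter, Set.mem_preimage,
      Set.mem_singleton_iff]
  rw [hset]
  exact isClosed_iInter fun hs => isClosed_iInter fun _ => isClosed_iInter fun x =>
    isClosed_singleton.preimage (continuous_dds hs x)

theorem closure_orbit'_subset_polyLT [T1Space G] {i : ℕ} {f : Λ → G} (hf : f ∈ polyLT Λ G i) :
    closure (orbit' f) ⊆ polyLT Λ G i := by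
  refine closure_minimal ?_ (isClosed_polyLT i)
  rintro _ ⟨z, rfl⟩ hs hlen x
  exact (dds_shift hs z f x).trans (hf hs hlen (x + z))

end Topology

end Differences

/-! ### Minimality -/

section Minimality

variable [AddCommMonoid Λ] [AddCommGroup G] [TopologicalSpace G] [IsTopologicalAddGroup G]

variable (Λ G) in
/-- The Ellis (enveloping) semigroup of the shift action on `G^Λ`: the closure of the set of shifts
in the topology of pointwise convergence of maps `G^Λ → G^Λ`. -/
def ellisSemigroup : Set ((Λ → G) → (Λ → G)) := closure (Set.range shift)

variable {u : (Λ → G) → (Λ → G)}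

theorem map_sub_of_mem_ellisSemigroup [T2Space G] (hu : u ∈ ellisSemigroup Λ G) (a b : Λ → G) :
    u (a - b) = u a - u b := by
  have hclosed : IsClosed {u : (Λ → G) → (Λ → G) | u (a - b) = u a - u b} :=
    isClosed_eq (continuous_apply _) ((continuous_apply a).sub (continuous_apply b))
  refine closure_minimal ?_ hclosed hu
  rintro _ ⟨z, rfl⟩
  rfl

theorem sub_self_mem_polyLT_of_mem_ellisSemigroup [T1Space G] (hu : u ∈ ellisSemigroup Λ G)
    {i : ℕ} {a : Λ → G} (ha : a ∈ polyLT Λ G (i + 1)) : u a - a ∈ polyLT Λ G i := by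
  have hclosed : IsClosed {u : (Λ → G) → (Λ → G) | u a - a ∈ polyLT Λ G i} :=
    (isClosed_polyLT i).preimage ((continuous_apply a).sub continuous_const)
  refine closure_minimal ?_ hclosed hu
  rintro _ ⟨z, rfl⟩
  exact shift_sub_self_mem_polyLT ha z

theorem eq_zero_of_mem_ellisSemigroup_of_map_eq_zero [T1Space G] (hu : u ∈ ellisSemigroup Λ G)
    {i : ℕ} {a : Λ → G} (ha : a ∈ polyLT Λ G i) (hua : u a = 0) : a = 0 := by
  induction i with
  | zero => exact eq_zero_of_mem_polyLT_zero ha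
  | succ i ih =>
    have hneg := sub_self_mem_polyLT_of_mem_ellisSemigroup hu ha
    rw [hua, zero_sub, neg_mem_iff] at hneg
    exact ih hneg

theorem map_eq_self_of_mem_ellisSemigroup_of_idempotent [T2Space G] (hu : u ∈ ellisSemigroup Λ G)
    (hidem : u ∘ u = u) {i : ℕ} {f : Λ → G} (hf : f ∈ polyLT Λ G i) : u f = f := by
  have hdiff : u f - f ∈ polyLT Λ G i :=
    sub_self_mem_polyLT_of_mem_ellisSemigroup hu (polyLT_le_succ i hf)
  have hker : u (u f - f) = 0 := by
    rw [map_sub_of_mem_ellisSemigroup hu, ← Function.comp_apply (f := u), hidem, sub_self]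
  exact sub_eq_zero.1 (eq_zero_of_mem_ellisSemigroup_of_map_eq_zero hu hdiff hker)

theorem mem_closure_orbit'_symm [CompactSpace G] [T2Space G] {i : ℕ} {f g : Λ → G}
    (hf : f ∈ polyLT Λ G i) (hg : g ∈ closure (orbit' f)) : f ∈ closure (orbit' g) := by
  rw [orbit'_eq_image_range_shift] at hg ⊢
  refine mem_closure_image_eval_symm (Set.forall_mem_range.2 continuous_shift) ?_
    (fun e he hidem => map_eq_self_of_mem_ellisSemigroup_of_idempotent he hidem hf) hg
  rintro _ ⟨z, rfl⟩ _ ⟨w, rfl⟩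
  exact ⟨z + w, (shift_comp_shift z w).symm⟩

theorem closure_orbit'_eq_of_mem [CompactSpace G] [T2Space G] {i : ℕ} {f g : Λ → G}
    (hf : f ∈ polyLT Λ G i) (hg : g ∈ closure (orbit' f)) :
    closure (orbit' g) = closure (orbit' f) :=
  (closure_orbit'_subset hg).antisymm (closure_orbit'_subset (mem_closure_orbit'_symm hf hg))

end Minimality

/-! ### Phase polynomials -/

section PhasePolynomials

variable (T : Λ → Y → Y)

theorem pds_cons (z : Λ) (zs : List Λ) (φ : Y → ℂ) (y : Y) :
    pds T (z :: zs) φ y = pds T zs φ (T z y) * (starRingEnd ℂ) (pds T zs φ y) := rfl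

theorem pds_one (zs : List Λ) (y : Y) : pds T zs (1 : Y → ℂ) y = 1 := by
  induction zs generalizing y with
  | nil => rfl
  | cons z zs ih => rw [pds_cons, ih, ih, map_one, one_mul]

theorem pds_mul (zs : List Λ) (φ ψ : Y → ℂ) (y : Y) :
    pds T zs (φ * ψ) y = pds T zs φ y * pds T zs ψ y := by
  induction zs generalizing y with
  | nil => rfl
  | cons z zs ih => rw [pds_cons, pds_cons, pds_cons, ih, ih, map_mul, mul_mul_mul_comm]

theorem pds_star (zs : List Λ) (φ : Y → ℂ) (y : Y) :
    pds T zs (star φ) y = star (pds T zs φ y) := by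
  induction zs generalizing y with
  | nil => rfl
  | cons z zs ih => rw [pds_cons, pds_cons, ih, ih, star_mul', starRingEnd_apply, starRingEnd_apply]

variable [TopologicalSpace Y] (k : ℕ)

/-- The continuous phase polynomials of degree at most `k`, as a submonoid of `C(Y, ℂ)`. -/
def phasePolySubmonoid : Submonoid C(Y, ℂ) where
  carrier := {ψ | IsPhasePoly T k ψ}
  one_mem' := ⟨map_continuous _, fun zs _ y => pds_one T zs y⟩
  mul_mem' {φ ψ} hφ hψ := ⟨map_continuous _, fun zs hlen y => by
    rw [ContinuousMap.coe_mul, pds_mul, hφ.2 zs hlen, hψ.2 zs hlen, one_mul]⟩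

variable {T k}

theorem star_mem_phasePolySubmonoid {φ : C(Y, ℂ)} (hφ : φ ∈ phasePolySubmonoid T k) :
    star φ ∈ phasePolySubmonoid T k :=
  ⟨map_continuous _, fun zs hlen y => by
    rw [ContinuousMap.coe_star, pds_star, hφ.2 zs hlen, star_one]⟩

variable (T k) in
theorem star_coe_phasePolySubmonoid :
    star (phasePolySubmonoid T k : Set C(Y, ℂ)) = phasePolySubmonoid T k :=
  Set.Subset.antisymm (fun φ hφ => star_star φ ▸ star_mem_phasePolySubmonoid hφ)
    fun _ hφ => star_mem_phasePolySubmonoid hφ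

variable (T k) in
theorem coe_adjoin_phasePolySubmonoid :
    (StarAlgebra.adjoin ℂ (phasePolySubmonoid T k : Set C(Y, ℂ)) : Set C(Y, ℂ)) =
      Submodule.span ℂ {ψ : C(Y, ℂ) | IsPhasePoly T k ψ} := by
  have hadjoin := Algebra.adjoin_eq_span ℂ (phasePolySubmonoid T k : Set C(Y, ℂ))
  rw [Submonoid.closure_eq] at hadjoin
  rw [← StarSubalgebra.coe_toSubalgebra, StarAlgebra.adjoin_toSubalgebra,
    star_coe_phasePolySubmonoid, Set.union_self, ← Subalgebra.coe_toSubmodule, hadjoin]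
  rfl

theorem dense_span_isPhasePoly [CompactSpace Y]
    (hsep : ∀ x y : Y, x ≠ y → ∃ φ : C(Y, ℂ), IsPhasePoly T k φ ∧ φ x ≠ φ y) :
    Dense (Submodule.span ℂ {ψ : C(Y, ℂ) | IsPhasePoly T k ψ} : Set C(Y, ℂ)) := by
  let A := StarAlgebra.adjoin ℂ (phasePolySubmonoid T k : Set C(Y, ℂ))
  have hA : A.SeparatesPoints := fun x y hxy => by
    obtain ⟨φ, hφ, hne⟩ := hsep x y hxy
    exact ⟨φ, ⟨φ, StarAlgebra.subset_adjoin ℂ _ hφ, rfl⟩, hne⟩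
  have htop := ContinuousMap.starSubalgebra_topologicalClosure_eq_top_of_separatesPoints A hA
  rw [← coe_adjoin_phasePolySubmonoid, dense_iff_closure_eq,
    ← StarSubalgebra.topologicalClosure_coe, htop, StarSubalgebra.coe_top]

theorem exists_forall_norm_sub_lt_of_dense [CompactSpace Y] {E : Type*} [NormedAddCommGroup E]
    {S : Set C(Y, E)} (hS : Dense S) (h : C(Y, E)) {ε : ℝ} (hε : 0 < ε) :
    ∃ g ∈ S, ∀ y, ‖h y - g y‖ < ε := by
  obtain ⟨g, hg, hdist⟩ := hS.exists_dist_lt h hε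
  exact ⟨g, hg, fun y => dist_eq_norm (h y) (g y) ▸ (ContinuousMap.dist_lt_iff hε).1 hdist y⟩

end PhasePolynomials

/-! ### Orbit closures of polynomial maps -/

section OrbitClosure

variable [AddCommMonoid Λ] [AddCommGroup G] [TopologicalSpace G]

theorem pds_addChar_eval (f : Λ → G) (χ : AddChar G Circle) (x : Λ) (zs : List Λ)
    (F : closure (orbit' f)) :
    pds (orbitClosureShift f) zs (fun F => (χ (F.1 x) : ℂ)) F = χ (dds zs F.1 x) := by
  induction zs generalizing F with
  | nil => rfl
  | cons z zs ih =>
    rw [pds_cons, ih, ih, dds_cons, orbitClosureShift, dds_shift, AddChar.map_sub_eq_div,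
      div_eq_mul_inv, Circle.coe_mul, Circle.coe_inv_eq_conj]

theorem isPhasePoly_addChar_eval [IsTopologicalAddGroup G] [T1Space G] {k : ℕ} {f : Λ → G}
    (hf : f ∈ polyLT Λ G (k + 1)) {χ : AddChar G Circle} (hχ : Continuous χ) (x : Λ) :
    IsPhasePoly (orbitClosureShift f) k fun F => (χ (F.1 x) : ℂ) := by
  refine ⟨?_, fun zs hlen F => ?_⟩
  · exact continuous_subtype_val.comp
      (hχ.comp ((continuous_apply x).comp continuous_subtype_val))
  · rw [pds_addChar_eval, closure_orbit'_subset_polyLT hf F.2 zs hlen x, AddChar.map_zero_eq_one,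
      Circle.coe_one]

theorem t2Space_of_addChar_separating
    (hchar : ∀ a b : G, a ≠ b → ∃ χ : AddChar G Circle, Continuous χ ∧ χ a ≠ χ b) : T2Space G :=
  ⟨fun a b hab => by
    obtain ⟨χ, hχ, hne⟩ := hchar a b hab
    exact separated_by_continuous hχ hne⟩

theorem exists_isPhasePoly_ne [IsTopologicalAddGroup G] [T1Space G]
    (hchar : ∀ a b : G, a ≠ b → ∃ χ : AddChar G Circle, Continuous χ ∧ χ a ≠ χ b) {k : ℕ}
    {f : Λ → G} (hf : f ∈ polyLT Λ G (k + 1)) {F F' : closure (orbit' f)} (hne : F ≠ F') :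
    ∃ φ : C(closure (orbit' f), ℂ), IsPhasePoly (orbitClosureShift f) k φ ∧ φ F ≠ φ F' := by
  obtain ⟨x, hx⟩ := Function.ne_iff.1 (Subtype.coe_ne_coe.2 hne)
  obtain ⟨χ, hχ, hχx⟩ := hchar _ _ hx
  have hphase := isPhasePoly_addChar_eval hf hχ x
  exact ⟨⟨_, hphase.1⟩, hphase, Circle.coe_injective.ne hχx⟩

theorem orbitClosure_Hpk_minimal_topAbramov_general [IsTopologicalAddGroup G] [CompactSpace G]
    (hchar : ∀ a b : G, a ≠ b → ∃ χ : AddChar G Circle, Continuous χ ∧ χ a ≠ χ b)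
    {Gf : ℕ → AddSubgroup G} {k : ℕ} (hGf : Gf (k + 1) = ⊥) {f : Λ → G}
    (hf : IsFilteredPoly Gf f) :
    (∀ g ∈ closure (orbit' f), closure (orbit' g) = closure (orbit' f)) ∧
    (∀ (h : C(closure (orbit' f), ℂ)) (ε : ℝ), 0 < ε →
      ∃ g ∈ Submodule.span ℂ
          {ψ : C(closure (orbit' f), ℂ) | IsPhasePoly (orbitClosureShift f) k ψ},
        ∀ y, ‖h y - g y‖ < ε) := by
  have hpoly : f ∈ polyLT Λ G (k + 1) := hf.mem_polyLT_succ hGf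
  have : T2Space G := t2Space_of_addChar_separating hchar
  have : CompactSpace (closure (orbit' f)) :=
    isCompact_iff_compactSpace.1 isClosed_closure.isCompact
  have hdense := dense_span_isPhasePoly fun _ _ hne => exists_isPhasePoly_ne hchar hpoly hne
  exact ⟨fun g hg => closure_orbit'_eq_of_mem hpoly hg,
    fun h ε hε => exists_forall_norm_sub_lt_of_dense hdense h hε⟩

end OrbitClosure

/-! ### The group `H_{p,k}` -/

instance discreteTopology_zmod (n : ℕ) : DiscreteTopology (ZMod n) := ⟨rfl⟩

theorem HfactorFilt_succ_eq_bot (p k : ℕ) (ℓ : Fin k) : HfactorFilt p k ℓ (k + 1) = ⊥ := by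
  have hexp : k + 1 - (ℓ.1 + 1) - 1 = k - (ℓ.1 + 1) := by omega
  rw [HfactorFilt, if_neg (by omega), hexp, ← Nat.cast_pow, ZMod.natCast_self,
    AddSubgroup.zmultiples_zero_eq_bot]

theorem HpkFilt_succ_eq_bot (p k : ℕ) : HpkFilt p k (k + 1) = ⊥ := by
  simp only [HpkFilt, HfactorFilt_succ_eq_bot, AddSubgroup.pi_bot]

theorem Hpk.exists_continuous_addChar_ne (p k : ℕ) [NeZero p] (a b : Hpk p k) (hab : a ≠ b) :
    ∃ χ : AddChar (Hpk p k) Circle, Continuous χ ∧ χ a ≠ χ b := by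
  obtain ⟨ℓ, hℓ⟩ := Function.ne_iff.1 hab
  obtain ⟨n, hn⟩ := Function.ne_iff.1 hℓ
  let coord : Hpk p k →+ Hfactor p k ℓ :=
    (Pi.evalAddMonoidHom (fun _ : ℕ => Hfactor p k ℓ) n).comp
      (Pi.evalAddMonoidHom (fun ℓ => ℕ → Hfactor p k ℓ) ℓ)
  have hcoord : Continuous coord := (continuous_apply n).comp (continuous_apply ℓ)
  have htoCircle : Continuous (ZMod.toCircle : AddChar (Hfactor p k ℓ) Circle) :=
    continuous_of_discreteTopology
  exact ⟨ZMod.toCircle.compAddMonoidHom coord, htoCircle.comp hcoord,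
    ZMod.injective_toCircle.ne hn⟩

/-- for every filtered polynomial map `f : 𝔽_p^ω → H_{p,k}`, the orbit
closure `Y_f` of `f` under the shift action is a minimal system (the orbit of every
`g ∈ Y_f` is dense in `Y_f`; in particular `Y_f` is transitive), and `(Y_f, 𝔽_p^ω)` is a
topological Abramov system of order at most `k`. -/
theorem orbitClosure_Hpk_minimal_topAbramov (p k : ℕ) (hp : p.Prime) (hk : 1 ≤ k)
    (f : (ℕ →₀ ZMod p) → Hpk p k) (hf : IsFilteredPoly (HpkFilt p k) f) :
    (∀ g ∈ closure (orbit' f), closure (orbit' g) = closure (orbit' f)) ∧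
    (∀ (h : C((closure (orbit' f) : Set ((ℕ →₀ ZMod p) → Hpk p k)), ℂ)) (ε : ℝ), 0 < ε →
      ∃ g ∈ Submodule.span ℂ
          {ψ : C((closure (orbit' f) : Set ((ℕ →₀ ZMod p) → Hpk p k)), ℂ) |
            IsPhasePoly (fun (z : ℕ →₀ ZMod p)
                (F : (closure (orbit' f) : Set ((ℕ →₀ ZMod p) → Hpk p k))) =>
              (⟨fun x => F.1 (x + z), shift_mem_orbitClosure f z F.2⟩ :
                (closure (orbit' f) : Set ((ℕ →₀ ZMod p) → Hpk p k)))) k ⇑ψ},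
        ∀ y, ‖h y - g y‖ < ε) := by
  have : NeZero p := ⟨hp.ne_zero⟩
  exact orbitClosure_Hpk_minimal_topAbramov_general (Hpk.exists_continuous_addChar_ne p k)
    (HpkFilt_succ_eq_bot p k) hf
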